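/- Any ℓ²-sum ℓ²(X) = (⊕_{i<ω} X)_2 of copies of a Banach space X is finitely representable in any of its closed subspaces of finite codimension. -/

import Mathlib

/-- `W` is finitely representable in `V`. -/
def FinitelyRepresentable (W V : Type*) [NormedAddCommGroup W] [NormedSpace ℝ W]
    [NormedAddCommGroup V] [NormedSpace ℝ V] : Prop :=
  ∀ ε : ℝ, 0 < ε → ∀ A : Subspace ℝ W, FiniteDimensional ℝ A →
    ∃ (B : Subspace ℝ V) (u : ↥A ≃L[ℝ] ↥B),
      ‖(u : ↥A →L[ℝ] ↥B)‖ * ‖(u.symm : ↥B →L[ℝ] ↥A)‖ ≤ 1 + ε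

/-- Auxiliary: the norms squared of the tensor sequence sum to the product. -/
theorem aux_hasSum {X : Type*} [NormedAddCommGroup X] [NormedSpace ℝ X]
    (c : ℕ →₀ ℝ) (x : lp (fun _ : ℕ => X) 2) :
    HasSum (fun n : ℕ => ‖c (Nat.unpair n).1 • x (Nat.unpair n).2‖ ^ 2)
      ((∑' a, (c a) ^ 2) * ‖x‖ ^ 2) := by
  have h1 : Summable (fun a => (c a) ^ 2) := by
    apply summable_of_hasFiniteSupport
    refine c.hasFiniteSupport.subset ?_
    intro a ha
    simp only [Function.mem_support] at ha ⊢
    intro h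
    exact ha (by simp [h])
  have h2 : HasSum (fun b => ‖x b‖ ^ 2) (‖x‖ ^ 2) := by
    have := lp.hasSum_norm (p := 2) (by norm_num) x
    simpa using this
  have h3 : Summable (fun p : ℕ × ℕ => (c p.1) ^ 2 * ‖x p.2‖ ^ 2) :=
    h1.mul_of_nonneg h2.summable (fun a => sq_nonneg _) (fun b => sq_nonneg _)
  have h4 := h1.hasSum.mul h2 h3
  have h5 := (Equiv.hasSum_iff Nat.pairEquiv.symm).2 h4
  have h6 : (fun n : ℕ => ‖c (Nat.unpair n).1 • x (Nat.unpair n).2‖ ^ 2) =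
      (fun p : ℕ × ℕ => (c p.1) ^ 2 * ‖x p.2‖ ^ 2) ∘ Nat.pairEquiv.symm := by
    funext n
    simp [norm_smul, mul_pow, Nat.pairEquiv]
    rfl
  rw [h6]
  exact h5

/-- The tensor map `x ↦ c ⊗ x`. -/
noncomputable def auxT {X : Type*} [NormedAddCommGroup X] [NormedSpace ℝ X] :
    (ℕ →₀ ℝ) →ₗ[ℝ] (lp (fun _ : ℕ => X) 2) →ₗ[ℝ] (lp (fun _ : ℕ => X) 2) :=
  LinearMap.mk₂ ℝ
    (fun c x => ⟨fun n : ℕ => c (Nat.unpair n).1 • x (Nat.unpair n).2,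
      memℓp_gen (by simpa using (aux_hasSum c x).summable)⟩)
    (by intro c d x; ext n; exact add_smul _ _ _)
    (by intro r c x; ext n; exact mul_smul _ _ _)
    (by intro c x y; ext n; exact smul_add _ _ _)
    (by intro r c x; ext n; exact smul_comm _ _ _)

theorem auxT_norm {X : Type*} [NormedAddCommGroup X] [NormedSpace ℝ X]
    (c : ℕ →₀ ℝ) (x : lp (fun _ : ℕ => X) 2) :
    ‖auxT c x‖ ^ 2 = (∑' a, (c a) ^ 2) * ‖x‖ ^ 2 := by
  have h := lp.hasSum_norm (p := 2) (by norm_num) (auxT c x)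
  have h' : HasSum (fun n => ‖auxT c x n‖ ^ 2) (‖auxT c x‖ ^ 2) := by simpa using h
  exact h'.unique (aux_hasSum c x)

/-- A linear isometry gives an isometric copy of its domain. -/
theorem aux_iso {E F : Type*} [NormedAddCommGroup E] [NormedSpace ℝ E]
    [NormedAddCommGroup F] [NormedSpace ℝ F] (I : E →ₗᵢ[ℝ] F) (ε : ℝ) (hε : 0 < ε) :
    ∃ (B : Subspace ℝ F) (u : E ≃L[ℝ] ↥B),
      ‖(u : E →L[ℝ] ↥B)‖ * ‖(u.symm : ↥B →L[ℝ] E)‖ ≤ 1 + ε := by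
  obtain ⟨B, e⟩ : ∃ B : Subspace ℝ F, Nonempty (E ≃ₗᵢ[ℝ] B) :=
    ⟨LinearMap.range I.toLinearMap, ⟨I.equivRange⟩⟩
  obtain ⟨e⟩ := e
  refine ⟨B, e.toContinuousLinearEquiv, ?_⟩
  have h1 : ‖(e.toContinuousLinearEquiv : E →L[ℝ] B)‖ ≤ 1 :=
    ContinuousLinearMap.opNorm_le_bound _ zero_le_one (fun x => by
      rw [one_mul]; exact (e.norm_map x).le)
  have h2 : ‖(e.toContinuousLinearEquiv.symm : B →L[ℝ] E)‖ ≤ 1 :=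
    ContinuousLinearMap.opNorm_le_bound _ zero_le_one (fun x => by
      rw [one_mul]; exact (e.symm.norm_map x).le)
  calc _ ≤ (1:ℝ) * 1 := mul_le_mul h1 h2 (ContinuousLinearMap.opNorm_nonneg _) zero_le_one
    _ ≤ 1 + ε := by linarith

/-- The ℓ²-sum `ℓ²(X)` of countably many copies of a Banach space `X` is finitely
representable in each of its closed subspaces of finite codimension. -/
theorem lpTwoSum_finitelyRepresentable_in_finite_codim_subspace
    {X : Type*} [NormedAddCommGroup X] [NormedSpace ℝ X] [CompleteSpace X]
    (V : Subspace ℝ (lp (fun _ : ℕ => X) 2))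
    (hV : IsClosed (V : Set (lp (fun _ : ℕ => X) 2)))
    (hcodim : FiniteDimensional ℝ (lp (fun _ : ℕ => X) 2 ⧸ V)) :
    FinitelyRepresentable (lp (fun _ : ℕ => X) 2) ↥V := by
  intro ε hε A hA
  let L : (ℕ →₀ ℝ) →ₗ[ℝ] (A →ₗ[ℝ] (lp (fun _ : ℕ => X) 2 ⧸ V)) :=
    { toFun := fun c => V.mkQ ∘ₗ (auxT c) ∘ₗ A.subtype
      map_add' := by intro c d; ext x; simp
      map_smul' := by intro r c; ext x; simp }
  have hL : ¬ Function.Injective L := by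
    intro h
    have hf : Module.Finite ℝ (ℕ →₀ ℝ) := Module.Finite.of_injective L h
    have := Module.Finite.finite_basis (Finsupp.basisSingleOne (R := ℝ) (ι := ℕ))
    exact not_finite ℕ
  obtain ⟨c, hc, hc0⟩ : ∃ c, L c = 0 ∧ c ≠ 0 := by
    by_contra! hh
    exact hL ((injective_iff_map_eq_zero L).2 hh)
  set S : ℝ := ∑' a, (c a) ^ 2 with hS
  have hSpos : 0 < S := by
    obtain ⟨a, ha⟩ := Finsupp.ne_iff.1 hc0
    have h1 : Summable (fun a => (c a) ^ 2) := by
      apply summable_of_hasFiniteSupport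
      refine c.hasFiniteSupport.subset ?_
      intro a ha
      simp only [Function.mem_support] at ha ⊢
      intro h
      exact ha (by simp [h])
    have ha' : c a ≠ 0 := by simpa using ha
    exact h1.tsum_pos (fun a => sq_nonneg _) a (by positivity)
  have hmem : ∀ x : A, auxT c (x : lp (fun _ : ℕ => X) 2) ∈ V := by
    intro x
    have := LinearMap.congr_fun hc x
    exact (Submodule.Quotient.mk_eq_zero V).1 this
  let T : A →ₗ[ℝ] V := (Real.sqrt S)⁻¹ • LinearMap.codRestrict V (auxT c ∘ₗ A.subtype) hmem
  have hT : ∀ x, ‖T x‖ = ‖x‖ := by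
    intro x
    have h1 : ‖T x‖ = (Real.sqrt S)⁻¹ * ‖auxT c (x : lp (fun _ : ℕ => X) 2)‖ := by
      change ‖(Real.sqrt S)⁻¹ • auxT c (x : lp (fun _ : ℕ => X) 2)‖ = _
      rw [norm_smul, Real.norm_of_nonneg (by positivity)]
    have h2 : ‖auxT c (x : lp (fun _ : ℕ => X) 2)‖ = Real.sqrt S * ‖x‖ := by
      rw [← Real.sqrt_sq (norm_nonneg (auxT c (x : lp (fun _ : ℕ => X) 2))), auxT_norm,
        Real.sqrt_mul hSpos.le, Real.sqrt_sq (norm_nonneg _)]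
      rfl
    rw [h1, h2, inv_mul_cancel_left₀ (Real.sqrt_pos.2 hSpos).ne']
  let I : A →ₗᵢ[ℝ] V := ⟨T, hT⟩
  exact aux_iso I ε hε
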